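/- Suppose the pair (A,B) is controllable (the controllability matrix [B, AB, …, A^{n-1}B] has rank n) and A is nonsingular. Then the L¹ value function V₁ is strictly convex on the reachable set R: for all distinct ξ, η ∈ R and all λ ∈ (0,1), V₁((1-λ)ξ + λη) < (1-λ)V₁(ξ) + λV₁(η). -/

import Mathlib

open MeasureTheory Set

noncomputable section

/-- Controllability matrix `[B, AB, ..., A^{n-1}B]`. -/
def ctrbMatrix (n : ℕ) (A : Matrix (Fin n) (Fin n) ℝ) (B : Fin n → ℝ) :
    Matrix (Fin n) (Fin n) ℝ :=
  Matrix.of fun i j => (A ^ (j : ℕ)).mulVec B i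

/-- `∫₀ᵀ e^{-As} B u(s) ds`. -/
def stateInt (n : ℕ) (T : ℝ) (A : Matrix (Fin n) (Fin n) ℝ) (B : Fin n → ℝ)
    (u : ℝ → ℝ) : Fin n → ℝ :=
  ∫ s in Icc (0:ℝ) T, u s • (NormedSpace.exp ((-s) • A)).mulVec B

/-- The magnitude constraint `‖u‖_∞ ≤ 1` on `[0,T]`. -/
def MagBdd (T : ℝ) (u : ℝ → ℝ) : Prop := ∀ t ∈ Icc (0:ℝ) T, |u t| ≤ 1

/-- The `L¹` norm of `u` on `[0,T]`. -/
def L1Norm (T : ℝ) (u : ℝ → ℝ) : ℝ := ∫ t in Icc (0:ℝ) T, |u t|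

/-- The `L⁰` norm of `u`: Lebesgue measure of `{t ∈ [0,T] : u t ≠ 0}`. -/
def L0Norm (T : ℝ) (u : ℝ → ℝ) : ℝ := (volume {t ∈ Icc (0:ℝ) T | u t ≠ 0}).toReal

/-- Admissible controls steering `ξ` to `0` at time `T`:
`∫₀ᵀ e^{-As} B u(s) ds = -ξ` and `‖u‖_∞ ≤ 1`. -/
def Admissible (n : ℕ) (T : ℝ) (A : Matrix (Fin n) (Fin n) ℝ) (B : Fin n → ℝ)
    (ξ : Fin n → ℝ) (u : ℝ → ℝ) : Prop :=
  Measurable u ∧ MagBdd T u ∧ stateInt n T A B u = -ξ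

/-- Value function of the maximum hands-off (`L⁰`-optimal) control problem. -/
def V0 (n : ℕ) (T : ℝ) (A : Matrix (Fin n) (Fin n) ℝ) (B : Fin n → ℝ)
    (ξ : Fin n → ℝ) : ℝ :=
  sInf {c | ∃ u, Admissible n T A B ξ u ∧ c = L0Norm T u}

/-- Value function of the `L¹`-optimal control problem. -/
def V1 (n : ℕ) (T : ℝ) (A : Matrix (Fin n) (Fin n) ℝ) (B : Fin n → ℝ)
    (ξ : Fin n → ℝ) : ℝ :=
  sInf {c | ∃ u, Admissible n T A B ξ u ∧ c = L1Norm T u}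

/-- The reachable set `R`. -/
def Reach (n : ℕ) (T : ℝ) (A : Matrix (Fin n) (Fin n) ℝ) (B : Fin n → ℝ) :
    Set (Fin n → ℝ) :=
  {x | ∃ u, Measurable u ∧ MagBdd T u ∧ x = stateInt n T A B u}

/-- The set `R_α`. -/
def ReachL1 (n : ℕ) (T : ℝ) (A : Matrix (Fin n) (Fin n) ℝ) (B : Fin n → ℝ)
    (α : ℝ) : Set (Fin n → ℝ) :=
  {x | ∃ u, Measurable u ∧ MagBdd T u ∧ L1Norm T u ≤ α ∧ x = stateInt n T A B u}

/-- A convex continuous function bounded below on a nonempty closed bounded convex subset of a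
Hilbert space attains its infimum. -/
lemma exists_min_of_convex {H : Type*} [NormedAddCommGroup H] [InnerProductSpace ℝ H]
    [CompleteSpace H] (K : Set H) (hne : K.Nonempty) (hcl : IsClosed K) (hcv : Convex ℝ K)
    (C : ℝ) (hC : ∀ x ∈ K, ‖x‖ ≤ C) (f : H → ℝ) (hf : Continuous f)
    (hfc : ConvexOn ℝ univ f) (hf0 : ∀ x, 0 ≤ f x) :
    ∃ x ∈ K, ∀ y ∈ K, f x ≤ f y := by
  set m := sInf (f '' K) with hm
  have hbdd : BddBelow (f '' K) := ⟨0, by rintro _ ⟨x, _, rfl⟩; exact hf0 x⟩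
  let S : ℕ → Set H := fun k => K ∩ {x | f x ≤ m + 1 / ((k:ℝ) + 1)}
  have hScl : ∀ k, IsClosed (S k) := fun k => hcl.inter (isClosed_le hf continuous_const)
  have hScv : ∀ k, Convex ℝ (S k) := fun k => by
    refine hcv.inter ?_
    simpa using hfc.convex_le (m + 1 / ((k:ℝ) + 1))
  have hSne : ∀ k, (S k).Nonempty := fun k => by
    obtain ⟨_, ⟨x, hx, rfl⟩, h⟩ := exists_lt_of_csInf_lt (hne.image f)
      (show sInf (f '' K) < m + 1 / ((k:ℝ) + 1) by
        have : (0:ℝ) < 1 / ((k:ℝ) + 1) := by positivity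
        linarith)
    exact ⟨x, hx, h.le⟩
  have hSanti : ∀ j k, j ≤ k → S k ⊆ S j := by
    rintro j k hjk x ⟨hx, hx2⟩
    refine ⟨hx, le_trans (b := m + 1 / ((k:ℝ) + 1)) hx2 ?_⟩
    have : (j:ℝ) ≤ k := by exact_mod_cast hjk
    gcongr
  have hmin : ∀ k, ∃ x ∈ S k, ∀ y ∈ S k, ‖x‖ ≤ ‖y‖ := fun k => by
    obtain ⟨v, hv, h⟩ := exists_norm_eq_iInf_of_complete_convex (hSne k) (hScl k).isComplete
      (hScv k) 0
    refine ⟨v, hv, fun y hy => ?_⟩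
    simp only [zero_sub, norm_neg] at h
    rw [h]
    exact ciInf_le (f := fun w : S k => ‖(w:H)‖) ⟨0, by rintro _ ⟨w, rfl⟩; exact norm_nonneg _⟩
      ⟨y, hy⟩
  choose x hxS hxmin using hmin
  have hmono : Monotone fun k => ‖x k‖ ^ 2 := fun j k hjk => by
    have := hxmin j _ (hSanti j k hjk (hxS k))
    dsimp only
    gcongr
  have hb : BddAbove (range fun k => ‖x k‖ ^ 2) := ⟨C ^ 2, by
    rintro _ ⟨k, rfl⟩
    have := hC _ (hxS k).1
    dsimp only
    gcongr⟩
  have hlim := tendsto_atTop_ciSup hmono hb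
  have hc := hlim.cauchySeq
  have hkey : ∀ j k, j ≤ k → ‖x k - x j‖ ^ 2 ≤ 2 * (‖x k‖ ^ 2 - ‖x j‖ ^ 2) := fun j k hjk => by
    have h1 := hxmin j _ ((hScv j) (hxS j) (hSanti j k hjk (hxS k))
      (by norm_num : (0:ℝ) ≤ 1/2) (by norm_num : (0:ℝ) ≤ 1/2) (by norm_num))
    rw [← smul_add, norm_smul] at h1
    norm_num at h1
    have h2 := parallelogram_law_with_norm ℝ (x k) (x j)
    rw [add_comm (x k)] at h2
    nlinarith [norm_nonneg (x j), norm_nonneg (x j + x k)]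
  have hcx : CauchySeq x := by
    rw [Metric.cauchySeq_iff'] at hc ⊢
    intro ε hε
    obtain ⟨N, hN⟩ := hc (ε ^ 2 / 2) (by positivity)
    refine ⟨N, fun k hk => ?_⟩
    have h1 := hN k hk
    rw [Real.dist_eq] at h1
    have h2 := hkey N k hk
    rw [dist_eq_norm]
    have h3 := le_abs_self (‖x k‖ ^ 2 - ‖x N‖ ^ 2)
    exact lt_of_pow_lt_pow_left₀ 2 hε.le (by linarith)
  obtain ⟨z, hz⟩ := cauchySeq_tendsto_of_complete hcx
  have hzS : ∀ k, z ∈ S k := fun k => (hScl k).mem_of_tendsto hz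
    (Filter.eventually_atTop.2 ⟨k, fun i hi => hSanti k i hi (hxS i)⟩)
  refine ⟨z, (hzS 0).1, fun y hy => ?_⟩
  have h1 : f z ≤ m := by
    have ht : Filter.Tendsto (fun k : ℕ => m + 1 / ((k:ℝ) + 1)) Filter.atTop (nhds (m + 0)) :=
      tendsto_const_nhds.add tendsto_one_div_add_atTop_nhds_zero_nat
    rw [add_zero] at ht
    exact ge_of_tendsto' ht fun k => (hzS k).2
  exact h1.trans (csInf_le hbdd ⟨y, hy, rfl⟩)

section analytic
attribute [local instance] Matrix.linftyOpNormedRing Matrix.linftyOpNormedAlgebra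

/-- `s ↦ p · e^{-sA} v`. -/
def pairF (n : ℕ) (A : Matrix (Fin n) (Fin n) ℝ) (p v : Fin n → ℝ) (s : ℝ) : ℝ :=
  p ⬝ᵥ (NormedSpace.exp ((-s) • A)).mulVec v

def pairL (n : ℕ) (p v : Fin n → ℝ) : Matrix (Fin n) (Fin n) ℝ →L[ℝ] ℝ :=
  LinearMap.toContinuousLinearMap
    { toFun := fun M => p ⬝ᵥ M.mulVec v
      map_add' := fun M N => by rw [Matrix.add_mulVec, dotProduct_add]
      map_smul' := fun c M => by
        rw [Matrix.smul_mulVec, dotProduct_smul]; rfl }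

lemma pairF_hasDerivAt (n : ℕ) (A : Matrix (Fin n) (Fin n) ℝ) (p v : Fin n → ℝ) (s : ℝ) :
    HasDerivAt (pairF n A p v) (- pairF n A p (A.mulVec v) s) s := by
  have h1 := (hasDerivAt_exp_smul_const (𝕂 := ℝ) A (-s)).scomp s (hasDerivAt_neg s)
  have h2 := (pairL n p v).hasFDerivAt.comp_hasDerivAt s h1
  have e : (pairL n p v) ((-1:ℝ) • (NormedSpace.exp (-s • A) * A))
      = - pairF n A p (A.mulVec v) s := by
    rw [map_smul]
    simp [pairL, pairF, Matrix.mulVec_mulVec]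
  rw [← e]
  exact h2

lemma pairF_analytic (n : ℕ) (A : Matrix (Fin n) (Fin n) ℝ) (p v : Fin n → ℝ) :
    AnalyticOnNhd ℝ (pairF n A p v) univ := by
  intro s _
  have h1 : AnalyticAt ℝ (fun s : ℝ => (-s) • A) s := by fun_prop
  have h2 : AnalyticAt ℝ (NormedSpace.exp : Matrix (Fin n) (Fin n) ℝ → _) ((-s) • A) :=
    NormedSpace.exp_analytic _
  have h3 := (pairL n p v).analyticAt (NormedSpace.exp ((-s) • A))
  have h4 : AnalyticAt ℝ (fun s : ℝ => NormedSpace.exp ((-s) • A)) s :=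
    AnalyticAt.fun_comp (g := NormedSpace.exp) (f := fun s : ℝ => (-s) • A) h2 h1
  exact AnalyticAt.fun_comp (g := pairL n p v) (f := fun s : ℝ => NormedSpace.exp ((-s) • A)) h3 h4
end analytic

lemma pairF_continuous (n : ℕ) (A : Matrix (Fin n) (Fin n) ℝ) (p v : Fin n → ℝ) :
    Continuous (pairF n A p v) :=
  continuous_iff_continuousAt.2 fun s => (pairF_hasDerivAt n A p v s).continuousAt

lemma pairF_zero_deriv (n : ℕ) (A : Matrix (Fin n) (Fin n) ℝ) (p v : Fin n → ℝ)
    (h : ∀ s, pairF n A p v s = 0) : ∀ s, pairF n A p (A.mulVec v) s = 0 := by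
  intro s
  have h1 := pairF_hasDerivAt n A p v s
  have h2 : pairF n A p v = fun _ => 0 := funext h
  rw [h2] at h1
  simpa using h1.unique (hasDerivAt_const s (0:ℝ))

/-- The nondegeneracy at the heart of the proof. -/
lemma pairF_sq_ne (n : ℕ) (A : Matrix (Fin n) (Fin n) ℝ) (B : Fin n → ℝ)
    (hctrb : (ctrbMatrix n A B).rank = n) (hA : A.det ≠ 0) (p : Fin n → ℝ)
    (h : ∀ s, pairF n A p B s ^ 2 = 1) : False := by
  have h1 : ∀ s, pairF n A p (A.mulVec B) s = 0 := fun s => by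
    have h1 := (pairF_hasDerivAt n A p B s).fun_pow 2
    have h2 : (fun s => pairF n A p B s ^ 2) = fun _ => 1 := funext h
    rw [h2] at h1
    have h3 := h1.unique (hasDerivAt_const s (1:ℝ))
    have h4 := h s
    have h5 : pairF n A p B s ≠ 0 := by
      intro h0; rw [h0] at h4; norm_num at h4
    simpa [h5] using h3
  have h2 : ∀ k : ℕ, ∀ s, pairF n A p ((A ^ (k + 1)).mulVec B) s = 0 := by
    intro k
    induction k with
    | zero => simpa using h1
    | succ k ih =>
      have := pairF_zero_deriv n A p _ ih
      rwa [Matrix.mulVec_mulVec, ← pow_succ'] at this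
  have h3 : ∀ k : ℕ, p ⬝ᵥ (A ^ (k + 1)).mulVec B = 0 := fun k => by
    have := h2 k 0
    simpa [pairF, NormedSpace.exp_zero] using this
  have hU : IsUnit (ctrbMatrix n A B) := by
    rw [← Matrix.linearIndependent_rows_iff_isUnit, linearIndependent_iff_card_eq_finrank_span,
      Set.finrank, ← Matrix.rank_eq_finrank_span_row, hctrb, Fintype.card_fin]
  have h4 : Matrix.vecMul (Matrix.vecMul p A) (ctrbMatrix n A B) = 0 := by
    ext j
    have := h3 j
    rw [pow_succ', ← Matrix.mulVec_mulVec, Matrix.dotProduct_mulVec] at this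
    exact this
  have h5 : Matrix.vecMul p A = 0 :=
    Matrix.vecMul_injective_of_isUnit hU (by simp only [h4, Matrix.zero_vecMul])
  have hAU : IsUnit A := (Matrix.isUnit_iff_isUnit_det A).2 (isUnit_iff_ne_zero.2 hA)
  have h6 : p = 0 := Matrix.vecMul_injective_of_isUnit hAU (by simp only [h5, Matrix.zero_vecMul])
  have := h 0
  simp [pairF, h6] at this

/-- On almost all times, `(p · e^{-sA}B)² ≠ 1`. -/
lemma pairF_ae (n : ℕ) (A : Matrix (Fin n) (Fin n) ℝ) (B : Fin n → ℝ)
    (hctrb : (ctrbMatrix n A B).rank = n) (hA : A.det ≠ 0) (p : Fin n → ℝ) :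
    ∀ᵐ s : ℝ, pairF n A p B s ^ 2 ≠ 1 := by
  have han : AnalyticOnNhd ℝ (fun s => pairF n A p B s ^ 2 - 1) univ :=
    ((pairF_analytic n A p B).pow 2).sub analyticOnNhd_const
  have hx : ∃ x, pairF n A p B x ^ 2 - 1 ≠ 0 := by
    by_contra! hcon
    exact pairF_sq_ne n A B hctrb hA p fun s => by linarith [hcon s]
  obtain ⟨x, hx⟩ := hx
  have h1 := han.preimage_zero_mem_codiscreteWithin (x := x) hx (mem_univ _) isConnected_univ
  have h2 := ae_restrict_le_codiscreteWithin (μ := (volume : Measure ℝ)) MeasurableSet.univ h1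
  rw [Measure.restrict_univ] at h2
  filter_upwards [h2] with s hs hs1
  apply hs
  simp [hs1]

/-- Components of `e^{-As}B`. -/
def phi (n : ℕ) (A : Matrix (Fin n) (Fin n) ℝ) (B : Fin n → ℝ) (i : Fin n) (s : ℝ) : ℝ :=
  (NormedSpace.exp ((-s) • A)).mulVec B i

lemma pairF_eq_sum (n : ℕ) (A : Matrix (Fin n) (Fin n) ℝ) (B p : Fin n → ℝ) (s : ℝ) :
    pairF n A p B s = ∑ i, p i * phi n A B i s := rfl

lemma phi_continuous (n : ℕ) (A : Matrix (Fin n) (Fin n) ℝ) (B : Fin n → ℝ) (i : Fin n) :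
    Continuous (phi n A B i) := by
  have h := pairF_continuous n A (Pi.single i 1) B
  convert h using 1
  ext s
  simp [pairF, phi]

lemma memLp_of_bdd (T : ℝ) (f : ℝ → ℝ) (hf : Measurable f) (C : ℝ)
    (hC : ∀ s ∈ Icc (0:ℝ) T, |f s| ≤ C) : MemLp f 2 (volume.restrict (Icc (0:ℝ) T)) :=
  MemLp.of_bound hf.aestronglyMeasurable C
    ((ae_restrict_iff' measurableSet_Icc).2 (Filter.Eventually.of_forall hC))

lemma integrable_of_bdd (T : ℝ) (f : ℝ → ℝ) (hf : Measurable f) (C : ℝ)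
    (hC : ∀ s ∈ Icc (0:ℝ) T, |f s| ≤ C) : Integrable f (volume.restrict (Icc (0:ℝ) T)) :=
  Integrable.of_bound hf.aestronglyMeasurable C
    ((ae_restrict_iff' measurableSet_Icc).2 (Filter.Eventually.of_forall hC))

lemma exists_bdd (T : ℝ) (f : ℝ → ℝ) (hf : Continuous f) :
    ∃ C, 0 ≤ C ∧ ∀ s ∈ Icc (0:ℝ) T, |f s| ≤ C := by
  obtain ⟨C, hC⟩ := (isCompact_Icc (a := (0:ℝ)) (b := T)).exists_bound_of_continuousOn
    hf.continuousOn
  exact ⟨max C 0, le_max_right _ _, fun s hs => (hC s hs).trans (le_max_left _ _)⟩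

lemma integrable_mul_phi (n : ℕ) (T : ℝ) (A : Matrix (Fin n) (Fin n) ℝ) (B : Fin n → ℝ)
    (u : ℝ → ℝ) (hu : Measurable u) (hb : MagBdd T u) (i : Fin n) :
    Integrable (fun s => u s * phi n A B i s) (volume.restrict (Icc (0:ℝ) T)) := by
  obtain ⟨C, hC0, hC⟩ := exists_bdd T _ (phi_continuous n A B i)
  refine integrable_of_bdd T _ (hu.mul (phi_continuous n A B i).measurable) C fun s hs => ?_
  rw [abs_mul]
  nlinarith [hb s hs, hC s hs, abs_nonneg (u s), abs_nonneg (phi n A B i s)]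

lemma stateInt_apply (n : ℕ) (T : ℝ) (A : Matrix (Fin n) (Fin n) ℝ) (B : Fin n → ℝ)
    (u : ℝ → ℝ) (hu : Measurable u) (hb : MagBdd T u) (i : Fin n) :
    stateInt n T A B u i = ∫ s in Icc (0:ℝ) T, u s * phi n A B i s := by
  unfold stateInt
  rw [eval_integral]
  · rfl
  · exact integrable_mul_phi n T A B u hu hb

lemma integrable_abs (T : ℝ) (u : ℝ → ℝ) (hu : Measurable u) (hb : MagBdd T u) :
    Integrable (fun s => |u s|) (volume.restrict (Icc (0:ℝ) T)) :=
  integrable_of_bdd T _ hu.abs 1 fun s hs => by rw [abs_abs]; exact hb s hs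

/-- Normal equations of least squares in `L²`. -/
lemma exists_proj {n : ℕ} (μ : Measure ℝ) (f : Fin n → ℝ → ℝ) (e : ℝ → ℝ)
    (hf : ∀ i, MemLp (f i) 2 μ) (he : MemLp e 2 μ) :
    ∃ p : Fin n → ℝ, ∀ i, ∫ s, f i s * (e s - ∑ j, p j * f j s) ∂μ = 0 := by
  let ψ : Fin n → Lp ℝ 2 μ := fun i => (hf i).toLp
  let W := Submodule.span ℝ (range ψ)
  have : FiniteDimensional ℝ W := FiniteDimensional.span_of_finite ℝ (finite_range ψ)
  have h1 := W.starProjection_apply_mem he.toLp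
  obtain ⟨p, hp⟩ := (Submodule.mem_span_range_iff_exists_fun ℝ).1 h1
  refine ⟨p, fun i => ?_⟩
  have h2 := W.starProjection_inner_eq_zero he.toLp (ψ i) (Submodule.subset_span ⟨i, rfl⟩)
  rw [← hp, real_inner_comm, L2.inner_def] at h2
  rw [← h2]
  apply integral_congr_ae
  have h3 : ∀ᵐ s ∂μ, ∀ j, (ψ j) s = f j s := ae_all_iff.2 fun j => (hf j).coeFn_toLp
  have h4 : ∀ᵐ s ∂μ, ∀ j, (p j • ψ j : Lp ℝ 2 μ) s = p j * ψ j s :=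
    ae_all_iff.2 fun j => Lp.coeFn_smul (p j) (ψ j)
  filter_upwards [h3, h4, he.coeFn_toLp, Lp.coeFn_sub he.toLp (∑ j, p j • ψ j),
    Lp.coeFn_finsetSum Finset.univ (fun j => p j • ψ j)] with s h3 h4 h5 h6 h7
  rw [h6]
  simp only [Pi.sub_apply, h5, h7, h4, h3, Finset.sum_apply]
  simp [mul_comm]

lemma pert_abs (u d : ℝ) (hu : |u| ≤ 1) (hd : |d| ≤ 1) :
    |u - |u| * (1 - |u|) * d| = |u| - u * (1 - |u|) * d ∧ |u| - u * (1 - |u|) * d ≤ 1 := by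
  obtain ⟨h1, h2⟩ := abs_le.1 hd
  rcases le_total 0 u with h | h
  · rw [abs_of_nonneg h] at hu ⊢
    have h3 : u * (1 - u) * d ≤ u * (1 - u) * 1 :=
      mul_le_mul_of_nonneg_left h2 (mul_nonneg h (by linarith))
    have h4 : u * (1 - u) * (-1) ≤ u * (1 - u) * d :=
      mul_le_mul_of_nonneg_left h1 (mul_nonneg h (by linarith))
    refine ⟨abs_of_nonneg (by nlinarith), by nlinarith⟩
  · rw [abs_of_nonpos h] at hu ⊢
    have h3 : (-u) * (1 - -u) * d ≤ (-u) * (1 - -u) * 1 :=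
      mul_le_mul_of_nonneg_left h2 (mul_nonneg (by linarith) (by linarith))
    have h4 : (-u) * (1 - -u) * (-1) ≤ (-u) * (1 - -u) * d :=
      mul_le_mul_of_nonneg_left h1 (mul_nonneg (by linarith) (by linarith))
    refine ⟨?_, by nlinarith⟩
    rw [abs_of_nonpos (by nlinarith)]
    ring

/-- `L¹`-optimal controls are bang-off-bang. -/
lemma bang_off_bang (n : ℕ) (T : ℝ)
    (A : Matrix (Fin n) (Fin n) ℝ) (B : Fin n → ℝ)
    (hctrb : (ctrbMatrix n A B).rank = n) (hA : A.det ≠ 0) (ξ : Fin n → ℝ) (u : ℝ → ℝ)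
    (hu : Admissible n T A B ξ u) (hopt : ∀ v, Admissible n T A B ξ v → L1Norm T u ≤ L1Norm T v) :
    ∀ᵐ s ∂(volume.restrict (Icc (0:ℝ) T)), u s = 0 ∨ u s = 1 ∨ u s = -1 := by
  obtain ⟨hum, hub, hus⟩ := hu
  set μ := volume.restrict (Icc (0:ℝ) T) with hμ
  let ρ : ℝ → ℝ := fun s => |u s| * (1 - |u s|)
  let e : ℝ → ℝ := fun s => u s * (1 - |u s|)
  have hρm : Measurable ρ := by fun_prop
  have hem : Measurable e := by fun_prop
  have hφm : ∀ i, Measurable (phi n A B i) := fun i => (phi_continuous n A B i).measurable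
  have hρ1 : ∀ s ∈ Icc (0:ℝ) T, |ρ s| ≤ 1 := fun s hs => by
    have h := hub s hs
    have h0 := abs_nonneg (u s)
    rw [abs_le]; constructor <;> simp only [ρ] <;> nlinarith
  have he1 : ∀ s ∈ Icc (0:ℝ) T, |e s| ≤ 1 := fun s hs => by
    have h := hub s hs
    have h0 := abs_nonneg (u s)
    simp only [e]
    rw [abs_mul, abs_of_nonneg (by linarith : 0 ≤ 1 - |u s|)]; nlinarith
  have hρφ : ∀ i, MemLp (fun s => ρ s * phi n A B i s) 2 μ := fun i => by
    obtain ⟨C, hC0, hC⟩ := exists_bdd T _ (phi_continuous n A B i)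
    refine memLp_of_bdd T _ (hρm.mul (hφm i)) C fun s hs => ?_
    rw [abs_mul]
    nlinarith [hρ1 s hs, hC s hs, abs_nonneg (ρ s), abs_nonneg (phi n A B i s)]
  have heL : MemLp e 2 μ := memLp_of_bdd T _ hem 1 he1
  obtain ⟨p, hp⟩ := exists_proj μ (fun i s => ρ s * phi n A B i s) e hρφ heL
  let g : ℝ → ℝ := fun s => e s - ∑ j, p j * (ρ s * phi n A B j s)
  have hg' : ∀ s, g s = e s - ρ s * pairF n A p B s := fun s => by
    simp only [g, pairF_eq_sum, Finset.mul_sum]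
    congr 1
    exact Finset.sum_congr rfl fun j _ => by ring
  have hgL : MemLp g 2 μ := heL.sub (memLp_finsetSum _ fun j _ => (hρφ j).const_mul (p j))
  have hgm : Measurable g := by
    have : g = fun s => e s - ρ s * pairF n A p B s := funext hg'
    rw [this]
    exact hem.sub (hρm.mul (pairF_continuous n A p B).measurable)
  obtain ⟨C, hC0, hC⟩ := exists_bdd T _ (pairF_continuous n A p B)
  have hgb : ∀ s ∈ Icc (0:ℝ) T, |g s| ≤ 1 + C := fun s hs => by
    rw [hg']
    refine (abs_sub _ _).trans ?_
    rw [abs_mul (ρ s)]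
    nlinarith [hρ1 s hs, hC s hs, he1 s hs, abs_nonneg (ρ s), abs_nonneg (pairF n A p B s)]
  let δ : ℝ := 1 / (1 + C)
  have hδ : 0 < δ := by positivity
  have hδg : ∀ s ∈ Icc (0:ℝ) T, |δ * g s| ≤ 1 := fun s hs => by
    rw [abs_mul, abs_of_pos hδ]
    calc δ * |g s| ≤ δ * (1 + C) := by gcongr; exact hgb s hs
      _ = 1 := by simp only [δ]; field_simp
  let v : ℝ → ℝ := fun s => u s - ρ s * (δ * g s)
  have hvm : Measurable v := hum.sub (hρm.mul (hgm.const_mul δ))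
  have hvabs : ∀ s ∈ Icc (0:ℝ) T, |v s| = |u s| - e s * (δ * g s) ∧
      |u s| - e s * (δ * g s) ≤ 1 := fun s hs => pert_abs _ _ (hub s hs) (hδg s hs)
  have hvb : MagBdd T v := fun s hs => by
    rw [(hvabs s hs).1]; exact (hvabs s hs).2
  have hρφg : ∀ i, Integrable (fun s => (ρ s * phi n A B i s) * g s) μ := fun i =>
    (hρφ i).integrable_mul hgL
  have hvs : stateInt n T A B v = -ξ := by
    rw [← hus]
    ext i
    rw [stateInt_apply n T A B v hvm hvb, stateInt_apply n T A B u hum hub]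
    have h1 : ∀ s, v s * phi n A B i s
        = u s * phi n A B i s - δ * ((ρ s * phi n A B i s) * g s) := fun s => by
      simp only [v]; ring
    simp_rw [h1]
    rw [integral_sub (integrable_mul_phi n T A B u hum hub i) ((hρφg i).const_mul δ),
      integral_const_mul]
    have := hp i
    change ∫ s, (ρ s * phi n A B i s) * g s ∂μ = 0 at this
    rw [this]; ring
  have hle := hopt v ⟨hvm, hvb, hvs⟩
  have heg : Integrable (fun s => e s * g s) μ := heL.integrable_mul hgL
  have hgg : Integrable (fun s => g s * g s) μ := hgL.integrable_mul hgL
  have h2 : L1Norm T v = L1Norm T u - δ * ∫ s, e s * g s ∂μ := by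
    unfold L1Norm
    rw [← integral_const_mul, ← integral_sub (integrable_abs T u hum hub) (heg.const_mul δ)]
    refine setIntegral_congr_fun measurableSet_Icc fun s hs => ?_
    rw [(hvabs s hs).1]; ring
  have h3 : ∫ s, e s * g s ∂μ = ∫ s, g s * g s ∂μ := by
    have h4 : ∀ s, e s * g s = g s * g s + ∑ j, p j * ((ρ s * phi n A B j s) * g s) := fun s => by
      have : e s = g s + ∑ j, p j * (ρ s * phi n A B j s) := by simp only [g]; ring
      conv_lhs => rw [this]
      rw [add_mul, Finset.sum_mul]
      congr 1
      exact Finset.sum_congr rfl fun j _ => by ring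
    simp_rw [h4]
    rw [integral_add hgg (integrable_finsetSum _ fun j _ => (hρφg j).const_mul (p j)),
      integral_finsetSum _ fun j _ => (hρφg j).const_mul (p j)]
    simp_rw [integral_const_mul]
    have : ∀ j, ∫ s, (ρ s * phi n A B j s) * g s ∂μ = 0 := hp
    simp [this]
  have h5 : ∫ s, g s * g s ∂μ = 0 := by
    refine le_antisymm ?_ (integral_nonneg fun s => mul_self_nonneg _)
    rw [h2, h3] at hle
    by_contra! hcon
    nlinarith [mul_pos hδ hcon]
  have h6 := (integral_eq_zero_iff_of_nonneg (fun s => mul_self_nonneg (g s)) hgg).1 h5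
  filter_upwards [h6, ae_restrict_of_ae (pairF_ae n A B hctrb hA p)] with s hs hs2
  have hs0 : g s = 0 := by simpa using hs
  rw [hg'] at hs0
  simp only [e, ρ] at hs0
  by_contra! hcon
  obtain ⟨c1, c2, c3⟩ := hcon
  have c4 : 1 - |u s| ≠ 0 := fun h => by
    rcases abs_eq (a := u s) (b := 1) (by norm_num) |>.1 (by linarith) with h | h
    · exact c2 h
    · exact c3 h
  have h7 : u s = |u s| * pairF n A p B s := by
    have : (1 - |u s|) * (u s - |u s| * pairF n A p B s) = 0 := by linarith
    rcases mul_eq_zero.1 this with h | h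
    · exact absurd h c4
    · linarith
  apply hs2
  have h8 : u s ^ 2 * 1 = u s ^ 2 * pairF n A p B s ^ 2 := by
    conv_lhs => rw [h7]
    rw [mul_pow, sq_abs]; ring
  exact (mul_left_cancel₀ (pow_ne_zero 2 c1) h8).symm

/-- Existence of `L¹`-optimal controls. -/
lemma exists_optimal (n : ℕ) (T : ℝ)
    (A : Matrix (Fin n) (Fin n) ℝ) (B : Fin n → ℝ) (ξ : Fin n → ℝ)
    (hne : ∃ u, Admissible n T A B ξ u) :
    ∃ u, Admissible n T A B ξ u ∧ ∀ v, Admissible n T A B ξ v → L1Norm T u ≤ L1Norm T v := by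
  set μ := volume.restrict (Icc (0:ℝ) T) with hμ
  have hφL : ∀ i, MemLp (phi n A B i) 2 μ := fun i => by
    obtain ⟨C, hC0, hC⟩ := exists_bdd T _ (phi_continuous n A B i)
    exact memLp_of_bdd T _ (phi_continuous n A B i).measurable C hC
  let one : Lp ℝ 2 μ := Lp.const 2 μ (1:ℝ)
  have hone : ∀ᵐ s ∂μ, one s = 1 := Lp.coeFn_const 2 μ (1:ℝ)
  let K : Set (Lp ℝ 2 μ) := {u | |u| ≤ one} ∩ {u | ∀ i, inner ℝ (hφL i).toLp u = -ξ i}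
  let f : Lp ℝ 2 μ → ℝ := fun u => inner ℝ one |u|
  have habsc : Continuous fun u : Lp ℝ 2 μ => |u| := by simp only [abs]; fun_prop
  have hle1 : ∀ u : Lp ℝ 2 μ, |u| ≤ one ↔ ∀ᵐ s ∂μ, |u s| ≤ 1 := fun u => by
    rw [← Lp.coeFn_le]
    constructor
    · intro h
      filter_upwards [h, hone, Lp.coeFn_abs u] with s h1 h2 h3
      rwa [← h3, ← h2]
    · intro h
      filter_upwards [h, hone, Lp.coeFn_abs u] with s h1 h2 h3
      rwa [h3, h2]
  have hfeq : ∀ u : Lp ℝ 2 μ, f u = ∫ s, |u s| ∂μ := fun u => by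
    simp only [f]
    rw [L2.inner_def]
    apply integral_congr_ae
    filter_upwards [hone, Lp.coeFn_abs u] with s h2 h3
    simp [h2, h3]
  have hint : ∀ u : Lp ℝ 2 μ, Integrable (fun s => |u s|) μ := fun u =>
    ((Lp.memLp u).integrable (by norm_num)).abs
  -- transfer from functions to `L²`
  have hto : ∀ v, Admissible n T A B ξ v →
      ∃ w ∈ K, f w = L1Norm T v := by
    rintro v ⟨hvm, hvb, hvs⟩
    have hvL : MemLp v 2 μ := memLp_of_bdd T v hvm 1 hvb
    refine ⟨hvL.toLp, ⟨?_, fun i => ?_⟩, ?_⟩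
    · refine (hle1 _).2 ?_
      filter_upwards [hvL.coeFn_toLp, ae_restrict_mem measurableSet_Icc] with s h1 h2
      rw [h1]; exact hvb s h2
    · rw [L2.inner_def, ← Pi.neg_apply, ← hvs, stateInt_apply n T A B v hvm hvb]
      apply integral_congr_ae
      filter_upwards [hvL.coeFn_toLp, (hφL i).coeFn_toLp] with s h1 h2
      simp [h1, h2]
    · rw [hfeq]
      apply integral_congr_ae
      filter_upwards [hvL.coeFn_toLp] with s h1
      rw [h1]
  have hKne : K.Nonempty := by
    obtain ⟨v, hv⟩ := hne
    obtain ⟨w, hw, _⟩ := hto v hv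
    exact ⟨w, hw⟩
  have hKcl : IsClosed K := by
    refine (isClosed_le habsc continuous_const).inter ?_
    simp only [Set.ofPred_forall]
    exact isClosed_iInter fun i => isClosed_eq (by fun_prop) continuous_const
  have hcomb : ∀ (x y : Lp ℝ 2 μ) (a b : ℝ), 0 ≤ a → 0 ≤ b →
      ∀ᵐ s ∂μ, |(a • x + b • y : Lp ℝ 2 μ) s| ≤ a * |x s| + b * |y s| := by
    intro x y a b ha hb
    filter_upwards [Lp.coeFn_add (a • x) (b • y), Lp.coeFn_smul a x, Lp.coeFn_smul b y]
      with s h1 h2 h3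
    rw [h1, Pi.add_apply, h2, h3]
    refine (abs_add_le _ _).trans (le_of_eq ?_)
    simp [abs_mul, abs_of_nonneg ha, abs_of_nonneg hb]
  have hKcv : Convex ℝ K := by
    rintro x ⟨hx1, hx2⟩ y ⟨hy1, hy2⟩ a b ha hb hab
    refine ⟨(hle1 _).2 ?_, fun i => ?_⟩
    · filter_upwards [hcomb x y a b ha hb, (hle1 _).1 hx1, (hle1 _).1 hy1] with s h1 h2 h3
      nlinarith
    · rw [inner_add_right, inner_smul_right, inner_smul_right, hx2 i, hy2 i, ← add_mul, hab,
        one_mul]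
  have hfcv : ConvexOn ℝ univ f := by
    refine ⟨convex_univ, fun x _ y _ a b ha hb hab => ?_⟩
    rw [hfeq, hfeq, hfeq, smul_eq_mul, smul_eq_mul, ← integral_const_mul, ← integral_const_mul,
      ← integral_add ((hint x).const_mul a) ((hint y).const_mul b)]
    exact integral_mono_ae (hint _) (((hint x).const_mul a).add ((hint y).const_mul b))
      (hcomb x y a b ha hb)
  have hKb : ∀ x ∈ K, ‖x‖ ≤ ‖one‖ := fun x hx => by
    refine norm_le_norm_of_abs_le_abs (hx.1.trans (le_abs_self _))
  obtain ⟨w, hwK, hwmin⟩ := exists_min_of_convex K hKne hKcl hKcv ‖one‖ hKb f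
    (continuous_const.inner habsc) hfcv
    (fun u => by rw [hfeq]; exact integral_nonneg fun s => abs_nonneg _)
  let u : ℝ → ℝ := fun s => max (-1) (min 1 (w s))
  have hwm : Measurable w := (Lp.stronglyMeasurable w).measurable
  have hum : Measurable u := measurable_const.max (measurable_const.min hwm)
  have hub : MagBdd T u := fun s _ => abs_le.2
    ⟨le_max_left _ _, max_le (by norm_num) (min_le_left _ _)⟩
  have huw : ∀ᵐ s ∂μ, u s = w s := by
    filter_upwards [(hle1 _).1 hwK.1] with s hs
    obtain ⟨h1, h2⟩ := abs_le.1 hs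
    simp only [u]
    rw [min_eq_right h2, max_eq_right h1]
  refine ⟨u, ⟨hum, hub, ?_⟩, fun v hv => ?_⟩
  · ext i
    rw [stateInt_apply n T A B u hum hub, Pi.neg_apply, ← hwK.2 i, L2.inner_def]
    apply integral_congr_ae
    filter_upwards [huw, (hφL i).coeFn_toLp] with s h1 h2
    simp [h1, h2]
  · obtain ⟨w', hw', he⟩ := hto v hv
    rw [← he]
    refine le_of_eq_of_le ?_ (hwmin w' hw')
    rw [hfeq]
    apply integral_congr_ae
    filter_upwards [huw] with s h1
    rw [h1]

lemma V1_le (n : ℕ) (T : ℝ) (A : Matrix (Fin n) (Fin n) ℝ) (B : Fin n → ℝ) (ξ : Fin n → ℝ)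
    (u : ℝ → ℝ) (hu : Admissible n T A B ξ u) : V1 n T A B ξ ≤ L1Norm T u :=
  csInf_le ⟨0, by rintro _ ⟨v, _, rfl⟩; exact integral_nonneg fun s => abs_nonneg _⟩ ⟨u, hu, rfl⟩

lemma V1_eq (n : ℕ) (T : ℝ) (A : Matrix (Fin n) (Fin n) ℝ) (B : Fin n → ℝ) (ξ : Fin n → ℝ)
    (u : ℝ → ℝ) (hu : Admissible n T A B ξ u)
    (hopt : ∀ v, Admissible n T A B ξ v → L1Norm T u ≤ L1Norm T v) :
    V1 n T A B ξ = L1Norm T u :=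
  le_antisymm (V1_le n T A B ξ u hu)
    (le_csInf ⟨_, u, hu, rfl⟩ (by rintro _ ⟨v, hv, rfl⟩; exact hopt v hv))

lemma exists_opt_of_reach (n : ℕ) (T : ℝ) (A : Matrix (Fin n) (Fin n) ℝ) (B : Fin n → ℝ)
    (ξ : Fin n → ℝ) (h : ξ ∈ Reach n T A B) :
    ∃ u, Admissible n T A B ξ u ∧ ∀ v, Admissible n T A B ξ v → L1Norm T u ≤ L1Norm T v := by
  apply exists_optimal
  obtain ⟨u, hum, hub, rfl⟩ := h
  refine ⟨fun s => - u s, hum.neg, fun s hs => by rw [abs_neg]; exact hub s hs, ?_⟩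
  unfold stateInt
  rw [← integral_neg]
  simp only [neg_smul]

lemma three_vals (u v l : ℝ) (h0 : 0 < l) (h1 : l < 1) (hu : u = 0 ∨ u = 1 ∨ u = -1)
    (hv : v = 0 ∨ v = 1 ∨ v = -1)
    (hw : (1 - l) * u + l * v = 0 ∨ (1 - l) * u + l * v = 1 ∨ (1 - l) * u + l * v = -1)
    (he : |(1 - l) * u + l * v| = (1 - l) * |u| + l * |v|) : u = v := by
  have a1 : |(-1:ℝ)| = 1 := by norm_num
  rcases hu with rfl | rfl | rfl <;> rcases hv with rfl | rfl | rfl <;> try rfl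
  all_goals
    exfalso
    rcases hw with hw | hw | hw <;> rw [hw] at he <;>
      simp only [abs_zero, abs_one, a1] at he <;> linarith

theorem L1_value_function_strictly_convex (n : ℕ) (T : ℝ) (hT : 0 < T)
    (A : Matrix (Fin n) (Fin n) ℝ) (B : Fin n → ℝ)
    (hctrb : (ctrbMatrix n A B).rank = n) (hA : A.det ≠ 0) :
    ∀ ξ ∈ Reach n T A B, ∀ η ∈ Reach n T A B, ξ ≠ η →
      ∀ l : ℝ, 0 < l → l < 1 →
        V1 n T A B ((1 - l) • ξ + l • η)
          < (1 - l) * V1 n T A B ξ + l * V1 n T A B η := by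
  intro ξ hξ η hη hne l hl0 hl1
  obtain ⟨u, hu, huo⟩ := exists_opt_of_reach n T A B ξ hξ
  obtain ⟨v, hv, hvo⟩ := exists_opt_of_reach n T A B η hη
  rw [V1_eq n T A B ξ u hu huo, V1_eq n T A B η v hv hvo]
  set w : ℝ → ℝ := fun s => (1 - l) * u s + l * v s with hwdef
  have hl2 : 0 < 1 - l := by linarith
  have hwabs : ∀ s, |w s| ≤ (1 - l) * |u s| + l * |v s| := fun s => by
    refine (abs_add_le _ _).trans (le_of_eq ?_)
    rw [abs_mul, abs_mul, abs_of_pos hl0, abs_of_pos hl2]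
  have hwm : Measurable w := (hu.1.const_mul _).add (hv.1.const_mul _)
  have hwb : MagBdd T w := fun s hs => by
    have h1 := hu.2.1 s hs
    have h2 := hv.2.1 s hs
    have h3 := hwabs s
    nlinarith
  have hws : Admissible n T A B ((1 - l) • ξ + l • η) w := by
    refine ⟨hwm, hwb, ?_⟩
    ext i
    have e1 := congrFun hu.2.2 i
    have e2 := congrFun hv.2.2 i
    rw [stateInt_apply n T A B u hu.1 hu.2.1] at e1
    rw [stateInt_apply n T A B v hv.1 hv.2.1] at e2
    rw [stateInt_apply n T A B w hwm hwb]
    have e3 : ∀ s, w s * phi n A B i s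
        = (1 - l) * (u s * phi n A B i s) + l * (v s * phi n A B i s) := fun s => by
      simp only [hwdef]; ring
    simp_rw [e3]
    rw [integral_add ((integrable_mul_phi n T A B u hu.1 hu.2.1 i).const_mul _)
      ((integrable_mul_phi n T A B v hv.1 hv.2.1 i).const_mul _), integral_const_mul,
      integral_const_mul, e1, e2]
    simp
    ring
  have iu := (integrable_abs T u hu.1 hu.2.1).const_mul (1 - l)
  have iv := (integrable_abs T v hv.1 hv.2.1).const_mul l
  have iw := integrable_abs T w hwm hwb
  have hsum : (1 - l) * L1Norm T u + l * L1Norm T v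
      = ∫ s in Icc (0:ℝ) T, ((1 - l) * |u s| + l * |v s|) := by
    unfold L1Norm
    rw [integral_add iu iv, integral_const_mul, integral_const_mul]
  have hL : L1Norm T w ≤ (1 - l) * L1Norm T u + l * L1Norm T v := by
    rw [hsum]
    exact integral_mono iw (iu.add iv) hwabs
  by_contra! hcon
  have hVw := V1_le n T A B _ w hws
  have hwo : ∀ z, Admissible n T A B ((1 - l) • ξ + l • η) z → L1Norm T w ≤ L1Norm T z :=
    fun z hz => (hL.trans hcon).trans (V1_le n T A B _ z hz)
  have hEq : ∫ s in Icc (0:ℝ) T, ((1 - l) * |u s| + l * |v s| - |w s|) = 0 := by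
    have iuv : Integrable (fun s => (1 - l) * |u s| + l * |v s|)
        (volume.restrict (Icc (0:ℝ) T)) := iu.add iv
    rw [integral_sub iuv iw, ← hsum]
    have := le_antisymm hL (hcon.trans hVw)
    change _ - L1Norm T w = 0
    linarith
  have hae := (integral_eq_zero_iff_of_nonneg (fun s => sub_nonneg.2 (hwabs s))
    ((iu.add iv).sub iw)).1 hEq
  have huv : ∀ᵐ s ∂(volume.restrict (Icc (0:ℝ) T)), u s = v s := by
    filter_upwards [hae, bang_off_bang n T A B hctrb hA _ u hu huo,
      bang_off_bang n T A B hctrb hA _ v hv hvo,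
      bang_off_bang n T A B hctrb hA _ w hws hwo] with s h1 h2 h3 h4
    refine three_vals _ _ l hl0 hl1 h2 h3 h4 ?_
    have h5 : (1 - l) * |u s| + l * |v s| - |w s| = 0 := h1
    change |w s| = _
    linarith
  apply hne
  have h7 : stateInt n T A B u = stateInt n T A B v := by
    unfold stateInt
    apply integral_congr_ae
    filter_upwards [huv] with s hs
    rw [hs]
  rw [hu.2.2, hv.2.2] at h7
  exact neg_injective h7
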